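/- On the reference triangle, the normal traces of the edge basis functions on the bottom edge form an L²-orthogonal family: there exist positive reals c_i such that for all 0 ≤ i, j, ∫_{−1}^{1} (φ_i · n)(x,0) (φ_j · n)(x,0) dx = c_i δ_{ij}, where n = (0,−1) is the outer unit normal of the bottom edge. -/

import Mathlib

open MeasureTheory

/-- Jacobi polynomial with parameters `(α, 0)`, via the Rodrigues formula. -/
noncomputable def jacobiP (α : ℝ) (n : ℕ) (x : ℝ) : ℝ :=
  1 / (2 ^ n * (n.factorial : ℝ) * (1 - x) ^ α) *
    iteratedDeriv n (fun t : ℝ => (1 - t) ^ α * (t ^ 2 - 1) ^ n) x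

/-- Integrated Jacobi polynomial `p̂_n^α`. -/
noncomputable def jacobiPhat (α : ℝ) (n : ℕ) (x : ℝ) : ℝ :=
  if n = 0 then 1 else ∫ ξ in (-1 : ℝ)..x, jacobiP α (n - 1) ξ

/-- Two-dimensional curl of a scalar field: `curl ψ = (∂_y ψ, -∂_x ψ)`. -/
noncomputable def curl2 (ψ : ℝ × ℝ → ℝ) (p : ℝ × ℝ) : ℝ × ℝ :=
  (deriv (fun y => ψ (p.1, y)) p.2, -deriv (fun x => ψ (x, p.2)) p.1)

/-- Barycentric coordinate `λ₁ = (1 - x - y)/2` on the reference triangle. -/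
noncomputable def lam1 (p : ℝ × ℝ) : ℝ := (1 - p.1 - p.2) / 2

/-- Barycentric coordinate `λ₂ = (1 + x - y)/2` on the reference triangle. -/
noncomputable def lam2 (p : ℝ × ℝ) : ℝ := (1 + p.1 - p.2) / 2

/-- Edge basis functions for the bottom edge of the reference triangle:
`φ₀` is the lowest-order Raviart–Thomas edge function, and for `i ≥ 1`,
`φ_i = curl (p̂_{i+1}^0(x/(1-y)) (1-y)^{i+1})`. -/
noncomputable def phiEdge : ℕ → ℝ × ℝ → ℝ × ℝ
  | 0 => fun p => lam2 p • curl2 lam1 p - lam1 p • curl2 lam2 p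
  | (i + 1) => curl2 fun q => jacobiPhat 0 (i + 2) (q.1 / (1 - q.2)) * (1 - q.2) ^ (i + 2)

/-- Euclidean dot product on `ℝ × ℝ`. -/
noncomputable def dot2 (a b : ℝ × ℝ) : ℝ := a.1 * b.1 + a.2 * b.2

open Polynomial in
/-- Unnormalised Legendre polynomial. -/
noncomputable def legQ (n : ℕ) : ℝ[X] := derivative^[n] ((X ^ 2 - 1) ^ n)

open Polynomial in
lemma iteratedDeriv_poly (p : ℝ[X]) (n : ℕ) :
    iteratedDeriv n (fun x => p.eval x) = fun x => (derivative^[n] p).eval x := by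
  induction n with
  | zero => simp
  | succ n ih =>
    rw [iteratedDeriv_succ, ih, Function.iterate_succ_apply']
    funext x
    exact Polynomial.deriv _

open Polynomial in
lemma jacobiP_zero_eq (n : ℕ) (x : ℝ) :
    jacobiP 0 n x = 1 / (2 ^ n * (n.factorial : ℝ)) * (legQ n).eval x := by
  have h := congrFun (iteratedDeriv_poly ((X ^ 2 - 1) ^ n) n) x
  simp only [eval_pow, eval_sub, eval_X, eval_one] at h
  simp only [jacobiP, Real.rpow_zero, one_mul, mul_one, legQ, h]

lemma trace_zero (x : ℝ) : dot2 (phiEdge 0 (x, 0)) (0, -1) = -(1 / 2) := by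
  have h1 : deriv (fun t : ℝ => (1 - t) / 2) x = -(1 / 2) := by
    have : HasDerivAt (fun t : ℝ => (1 - t) / 2) ((-1) / 2) x :=
      ((hasDerivAt_id x).const_sub 1).div_const 2
    rw [this.deriv]; norm_num
  have h2 : deriv (fun t : ℝ => (1 + t) / 2) x = 1 / 2 := by
    have : HasDerivAt (fun t : ℝ => (1 + t) / 2) (1 / 2) x :=
      ((hasDerivAt_id x).const_add 1).div_const 2
    rw [this.deriv]
  simp only [phiEdge, dot2, curl2, lam1, lam2, sub_zero, h1, h2, Prod.snd_sub, Prod.smul_snd,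
    smul_eq_mul]
  ring

lemma trace_succ (i : ℕ) (x : ℝ) :
    dot2 (phiEdge (i + 1) (x, 0)) (0, -1) = jacobiP 0 (i + 1) x := by
  have hc : Continuous (jacobiP 0 (i + 1)) := by
    have : jacobiP 0 (i + 1) = fun x => 1 / (2 ^ (i+1) * ((i+1).factorial : ℝ)) *
        (legQ (i+1)).eval x := funext (jacobiP_zero_eq (i+1))
    rw [this]
    fun_prop
  have := Continuous.deriv_integral _ hc (-1) x
  simp only [phiEdge, dot2, curl2, jacobiPhat, sub_zero, div_one, one_pow, mul_one]
  simp [this]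

lemma trace_eq (i : ℕ) : ∃ a : ℝ, a ≠ 0 ∧ ∀ x : ℝ,
    dot2 (phiEdge i (x, 0)) (0, -1) = a * (legQ i).eval x := by
  cases i with
  | zero => exact ⟨-(1 / 2), by norm_num, fun x => by rw [trace_zero]; simp [legQ]⟩
  | succ i =>
    exact ⟨1 / (2 ^ (i + 1) * ((i + 1).factorial : ℝ)), by positivity,
      fun x => by rw [trace_succ, jacobiP_zero_eq]⟩

open Polynomial in
lemma boundary (n k : ℕ) (hk : k < n) (x : ℝ) (hx : x ^ 2 = 1) :
    (derivative^[k] ((X ^ 2 - 1 : ℝ[X]) ^ n)).eval x = 0 := by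
  obtain ⟨r, hr⟩ := pow_sub_dvd_iterate_derivative_pow (X ^ 2 - 1 : ℝ[X]) n k
  rw [hr]
  have : n - k ≠ 0 := by omega
  simp [hx, this]

open Polynomial in
lemma orth_aux (n k : ℕ) (hk : k ≤ n) : ∀ q : ℝ[X], q.degree < k →
    ∫ x in (-1 : ℝ)..1, q.eval x * (derivative^[k] ((X ^ 2 - 1 : ℝ[X]) ^ n)).eval x = 0 := by
  induction k with
  | zero =>
    intro q hq
    have : q = 0 := by simpa using hq
    simp [this]
  | succ k ih =>
    intro q hq
    rw [Function.iterate_succ_apply']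
    rw [intervalIntegral.integral_mul_deriv_eq_deriv_mul
      (u := fun x => q.eval x) (u' := fun x => (derivative q).eval x)
      (v := fun x => (derivative^[k] ((X ^ 2 - 1 : ℝ[X]) ^ n)).eval x)
      (fun x _ => q.hasDerivAt x) (fun x _ => Polynomial.hasDerivAt _ x)
      ((Polynomial.continuous _).intervalIntegrable _ _)
      ((Polynomial.continuous _).intervalIntegrable _ _)]
    rw [boundary n k hk 1 (by norm_num), boundary n k hk (-1) (by norm_num), ih (by omega)]
    · simp
    · by_cases h0 : q = 0
      · simp [h0]
      · have h1 := degree_derivative_lt h0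
        rw [degree_eq_natDegree h0] at hq h1
        refine h1.trans_le ?_
        have : q.natDegree < k + 1 := by exact_mod_cast hq
        exact_mod_cast Nat.lt_succ_iff.mp this

open Polynomial in
lemma legQ_natDegree (n : ℕ) : (legQ n).natDegree ≤ n := by
  have h : ((X ^ 2 - 1 : ℝ[X]) ^ n).natDegree ≤ n * 2 := by
    compute_degree
  have := natDegree_iterate_derivative ((X ^ 2 - 1 : ℝ[X]) ^ n) n
  unfold legQ
  omega

open Polynomial in
lemma legQ_ne_zero (n : ℕ) : legQ n ≠ 0 := by
  intro h
  have h1 := congrArg (fun p => p.coeff n) h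
  have hm : (X ^ 2 - 1 : ℝ[X]).Monic := by monicity!
  have hd : (X ^ 2 - 1 : ℝ[X]).natDegree = 2 := by compute_degree!
  have hl : ((X ^ 2 - 1 : ℝ[X]) ^ n).coeff (n + n) = 1 := by
    have := (hm.pow n).coeff_natDegree
    rwa [hm.natDegree_pow, hd, mul_two] at this
  simp only [legQ, coeff_iterate_derivative, hl, coeff_zero] at h1
  have : (n + n).descFactorial n ≠ 0 := by
    intro h; rw [Nat.descFactorial_eq_zero_iff_lt] at h; omega
  simp [this] at h1

lemma orth_lt (i j : ℕ) (h : i < j) :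
    ∫ x in (-1 : ℝ)..1, (legQ i).eval x * (legQ j).eval x = 0 := by
  apply orth_aux j j le_rfl
  refine Polynomial.degree_le_natDegree.trans_lt ?_
  exact_mod_cast (legQ_natDegree i).trans_lt h

lemma orth_ne (i j : ℕ) (h : i ≠ j) :
    ∫ x in (-1 : ℝ)..1, (legQ i).eval x * (legQ j).eval x = 0 := by
  rcases lt_or_gt_of_ne h with h | h
  · exact orth_lt i j h
  · simp_rw [mul_comm ((legQ i).eval _)]
    exact orth_lt j i h

lemma legQ_pos (i : ℕ) :
    0 < ∫ x in (-1 : ℝ)..1, (legQ i).eval x * (legQ i).eval x := by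
  apply intervalIntegral.integral_pos (by norm_num)
  · fun_prop
  · intro x _; exact mul_self_nonneg _
  · by_contra! hcon
    apply legQ_ne_zero i
    apply Polynomial.eq_zero_of_infinite_isRoot
    refine (Set.Icc_infinite (show (-1 : ℝ) < 1 by norm_num)).mono fun x hx => ?_
    exact mul_self_eq_zero.mp (le_antisymm (hcon x hx) (mul_self_nonneg _))

/-- The normal traces of the edge basis functions on the bottom edge of the
reference triangle (with outer unit normal `n = (0,-1)`) form an `L²`-orthogonal family. -/
theorem edge_normal_traces_orthogonal :
    ∃ c : ℕ → ℝ, (∀ i, 0 < c i) ∧ ∀ i j : ℕ,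
      ∫ x in (-1 : ℝ)..1,
          dot2 (phiEdge i (x, 0)) (0, -1) * dot2 (phiEdge j (x, 0)) (0, -1)
        = c i * (if i = j then 1 else 0) := by
  choose a ha htr using trace_eq
  refine ⟨fun i => a i * a i * ∫ x in (-1 : ℝ)..1, (legQ i).eval x * (legQ i).eval x,
    fun i => mul_pos (mul_self_pos.mpr (ha i)) (legQ_pos i), fun i j => ?_⟩
  have : ∀ x : ℝ, dot2 (phiEdge i (x, 0)) (0, -1) * dot2 (phiEdge j (x, 0)) (0, -1)
      = a i * a j * ((legQ i).eval x * (legQ j).eval x) := fun x => by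
    rw [htr, htr]; ring
  simp_rw [this]
  rw [intervalIntegral.integral_const_mul]
  by_cases h : i = j
  · subst h; simp
  · simp [h, orth_ne i j h]
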